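/- arXiv:hep-th/0402057 — 6 statements merged into one kernel-verified Lean document; each statement's English description precedes it below -/
import Mathlib

section
/- Let V be a finite-dimensional real inner product space, a : V → V self-adjoint, σ₀ : V → V self-adjoint with a∘σ₀∘a = a, b ∈ V and Γ ∈ V with aΓ + b = 0, and c ∈ ℝ. For y ∈ V set F(y) = σ₀(a y + b). Then for all y ∈ V: ½⟨a y, y⟩ + ⟨b, y⟩ + c = ½⟨a F(y), F(y)⟩ + c', where c' = c − ½⟨aΓ, Γ⟩. -/
open scoped InnerProductSpace

/-- The quadratic Lagrangian `½⟪a y, y⟫ + ⟪b, y⟫ + c` equals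
`½⟪a F(y), F(y)⟫ + c'` with `F y = σ₀ (a y + b)` and `c' = c - ½⟪a Γ, Γ⟫`. -/
theorem quadratic_lagrangian_rewriting
    (V : Type*) [NormedAddCommGroup V] [InnerProductSpace ℝ V]
    [FiniteDimensional ℝ V] (a σ₀ : V →ₗ[ℝ] V)
    (ha : a.IsSymmetric) (hσ₀ : σ₀.IsSymmetric)
    (h1 : a ∘ₗ σ₀ ∘ₗ a = a)
    (b Γ : V) (hΓ : a Γ + b = 0) (c : ℝ) :
    ∀ y : V,
      (1 / 2) * ⟪a y, y⟫_ℝ + ⟪b, y⟫_ℝ + c =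
        (1 / 2) * ⟪a (σ₀ (a y + b)), σ₀ (a y + b)⟫_ℝ + (c - (1 / 2) * ⟪a Γ, Γ⟫_ℝ) := by
  intro y
  have hb : a y + b = a (y - Γ) := by
    rw [map_sub, eq_neg_of_add_eq_zero_right hΓ, sub_eq_add_neg]
  have haσa : a (σ₀ (a (y - Γ))) = a (y - Γ) := LinearMap.congr_fun h1 (y - Γ)
  -- The quadratic form of `a` takes the same value at `F y = σ₀ (a (y - Γ))` and at `y - Γ`;
  -- what remains is completing the square around `Γ`.
  have hF : ⟪a (y - Γ), σ₀ (a (y - Γ))⟫_ℝ = ⟪a (y - Γ), y - Γ⟫_ℝ := by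
    rw [ha (y - Γ) (σ₀ (a (y - Γ))), haσa, real_inner_comm]
  have hcross : ⟪a y, Γ⟫_ℝ = ⟪a Γ, y⟫_ℝ := by
    rw [ha y Γ, real_inner_comm]
  rw [hb, haσa, hF, eq_neg_of_add_eq_zero_right hΓ, map_sub]
  simp only [inner_sub_left, inner_sub_right, inner_neg_left]
  rw [hcross]
  ring
end

section
/- Let V be a finite-dimensional real inner product space, a : V → V self-adjoint, σ = σ₀ + σ₁ a split generalized inverse of a (a∘σ∘a = a, σ₀∘a∘σ₀ = σ₀, a∘σ₁ = σ₁∘a = 0), b ∈ V, Γ ∈ V with aΓ + b = 0, and c ∈ ℝ. Define L(y) = ½⟨a y, y⟩ + ⟨b, y⟩ + c, H(p) = ⟨p, Γ⟩ + ½⟨σ₀ p, p⟩ + ½⟨σ₁ p, p⟩ − (c − ½⟨aΓ, Γ⟩), and Ĥ(p) = Γ + σ p. Then for every p in range a: ⟨p, Ĥ(p)⟩ − H(p) = L(Ĥ(p)). -/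
/-!
For `p = a y` in the range of `a`, `σ₁ p = 0` and `s = σ p = σ₀ p` satisfies `a s = p`.
With `b = -a Γ` and the symmetry of `a`, completing the square gives
`L (Γ + s) = ½⟪p, s⟫ + c - ½⟪a Γ, Γ⟫`, which is also the value of `⟪p, Γ + s⟫ - H p`.
-/

open scoped InnerProductSpace

/-- The association condition `Ĥ*L_H = Ĥ*L` on the constraint space
`N_L = range a`: for every `p ∈ range a`,
`⟪p, Ĥ p⟫ - H p = L (Ĥ p)`, where `L y = ½⟪a y, y⟫ + ⟪b, y⟫ + c`,
`H p = ⟪p, Γ⟫ + ½⟪σ₀ p, p⟫ + ½⟪σ₁ p, p⟫ - (c - ½⟪a Γ, Γ⟫)` and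
`Ĥ p = Γ + (σ₀ + σ₁) p`. -/
theorem association_on_constraint_space
    (V : Type*) [NormedAddCommGroup V] [InnerProductSpace ℝ V]
    [FiniteDimensional ℝ V] (a σ₀ σ₁ : V →ₗ[ℝ] V) (ha : a.IsSymmetric)
    (hσ : a ∘ₗ (σ₀ + σ₁) ∘ₗ a = a) (h0 : σ₀ ∘ₗ a ∘ₗ σ₀ = σ₀)
    (h1 : a ∘ₗ σ₁ = 0) (h2 : σ₁ ∘ₗ a = 0)
    (b Γ : V) (hΓ : a Γ + b = 0) (c : ℝ) :
    ∀ p ∈ LinearMap.range a,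
      ⟪p, Γ + (σ₀ + σ₁) p⟫_ℝ -
          (⟪p, Γ⟫_ℝ + (1 / 2) * ⟪σ₀ p, p⟫_ℝ + (1 / 2) * ⟪σ₁ p, p⟫_ℝ -
            (c - (1 / 2) * ⟪a Γ, Γ⟫_ℝ)) =
        (1 / 2) * ⟪a (Γ + (σ₀ + σ₁) p), Γ + (σ₀ + σ₁) p⟫_ℝ +
          ⟪b, Γ + (σ₀ + σ₁) p⟫_ℝ + c := by
  rintro _ ⟨y, rfl⟩
  have hσ₁ : σ₁ (a y) = 0 := by simpa using LinearMap.congr_fun h2 y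
  -- On `range a` the map `σ` is a right inverse of `a`, and there it reduces to `σ₀`.
  have hs : a (σ₀ (a y)) = a y := by
    simpa [hσ₁] using LinearMap.congr_fun hσ y
  have hb : b = -a Γ := (neg_eq_of_add_eq_zero_right hΓ).symm
  -- Symmetry of `a` makes the two cross terms in `L (Γ + σ p)` equal, so they cancel
  -- against `⟪b, σ p⟫ = -⟪a Γ, σ p⟫`.
  have hcross : ⟪a y, Γ⟫_ℝ = ⟪a Γ, σ₀ (a y)⟫_ℝ := by
    rw [← real_inner_comm, ha Γ (σ₀ (a y)), hs]
  have hcomm : ⟪σ₀ (a y), a y⟫_ℝ = ⟪a y, σ₀ (a y)⟫_ℝ := real_inner_comm _ _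
  simp only [LinearMap.add_apply, hσ₁, add_zero, map_add, hs, hb, inner_add_left,
    inner_add_right, inner_neg_left, inner_zero_left, hcomm, hcross]
  ring
end

section
/- Let V be a finite-dimensional real inner product space, a : V → V self-adjoint, b ∈ V, c ∈ ℝ. Let Γ, Γ' ∈ V satisfy aΓ + b = 0 and aΓ' + b = 0, and let σ = σ₀ + σ₁ and σ' = σ₀' + σ₁' be two split generalized inverses of a (a∘σ∘a = a, σ₀∘a∘σ₀ = σ₀, a∘σ₁ = σ₁∘a = 0, and likewise for the primed maps). Define H(p) = ⟨p, Γ⟩ + ½⟨σ₀ p, p⟩ + ½⟨σ₁ p, p⟩ − (c − ½⟨aΓ, Γ⟩) and H'(p) analogously with Γ', σ₀', σ₁'. Then H(p) = H'(p) for every p in range a. -/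
open scoped InnerProductSpace

/-- For `p = a x`, the quadratic part of an associated Hamiltonian is `½⟪a x, x⟫`, which does not
involve the generalized inverse: `σ₁` kills `range a`, and symmetry of `a` moves it onto
`σ₀ (a x)`, where `a σ₀ a = a`. -/
lemma splitInverse_quadratic_on_range {V : Type*} [NormedAddCommGroup V] [InnerProductSpace ℝ V]
    {a σ₀ σ₁ : V →ₗ[ℝ] V} (ha : a.IsSymmetric)
    (hσ : a ∘ₗ (σ₀ + σ₁) ∘ₗ a = a) (h2 : σ₁ ∘ₗ a = 0) (x : V) :
    (1 / 2) * ⟪σ₀ (a x), a x⟫_ℝ + (1 / 2) * ⟪σ₁ (a x), a x⟫_ℝ = (1 / 2) * ⟪a x, x⟫_ℝ := by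
  have hσ₁ : σ₁ (a x) = 0 := LinearMap.congr_fun h2 x
  have hσ₀ : a (σ₀ (a x)) = a x := by
    simpa [hσ₁] using LinearMap.congr_fun hσ x
  rw [hσ₁, inner_zero_left, ← ha, hσ₀]
  ring

/-- Two Hamiltonians associated to the same almost-regular quadratic
Lagrangian coincide on the Lagrangian constraint space `N_L = range a`. -/
theorem associated_hamiltonians_agree_on_constraint
    (V : Type*) [NormedAddCommGroup V] [InnerProductSpace ℝ V]
    [FiniteDimensional ℝ V] (a : V →ₗ[ℝ] V) (ha : a.IsSymmetric)
    (b : V) (c : ℝ) (Γ Γ' : V) (hΓ : a Γ + b = 0) (hΓ' : a Γ' + b = 0)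
    (σ₀ σ₁ σ₀' σ₁' : V →ₗ[ℝ] V)
    (hσ : a ∘ₗ (σ₀ + σ₁) ∘ₗ a = a) (h0 : σ₀ ∘ₗ a ∘ₗ σ₀ = σ₀)
    (h1 : a ∘ₗ σ₁ = 0) (h2 : σ₁ ∘ₗ a = 0)
    (hσ' : a ∘ₗ (σ₀' + σ₁') ∘ₗ a = a) (h0' : σ₀' ∘ₗ a ∘ₗ σ₀' = σ₀')
    (h1' : a ∘ₗ σ₁' = 0) (h2' : σ₁' ∘ₗ a = 0) :
    ∀ p ∈ LinearMap.range a,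
      ⟪p, Γ⟫_ℝ + (1 / 2) * ⟪σ₀ p, p⟫_ℝ + (1 / 2) * ⟪σ₁ p, p⟫_ℝ -
          (c - (1 / 2) * ⟪a Γ, Γ⟫_ℝ) =
        ⟪p, Γ'⟫_ℝ + (1 / 2) * ⟪σ₀' p, p⟫_ℝ + (1 / 2) * ⟪σ₁' p, p⟫_ℝ -
          (c - (1 / 2) * ⟪a Γ', Γ'⟫_ℝ) := by
  rintro _ ⟨x, rfl⟩
  -- The vector `Γ` enters only modulo `ker a`, which is orthogonal to `range a`.
  have hΓΓ' : a Γ = a Γ' := add_right_cancel (hΓ.trans hΓ'.symm)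
  have hlin : ⟪a x, Γ⟫_ℝ = ⟪a x, Γ'⟫_ℝ := by rw [ha, ha, hΓΓ']
  have hconst : ⟪a Γ, Γ⟫_ℝ = ⟪a Γ', Γ'⟫_ℝ := by
    rw [hΓΓ', ha, hΓΓ', ← ha]
  have hq := splitInverse_quadratic_on_range ha hσ h2 x
  have hq' := splitInverse_quadratic_on_range ha hσ' h2' x
  linarith
end

section
/- Let V be a finite-dimensional real inner product space, a : V → V self-adjoint, σ₀ : V → V self-adjoint with a∘σ₀∘a = a and σ₀∘a∘σ₀ = σ₀, b ∈ V, Γ ∈ V with aΓ + b = 0, and c' ∈ ℝ. Set F(y) = σ₀(a y + b), T = a∘σ₀, and define ℒ_N(y, P) = ⟨P, F(y)⟩ − ½⟨σ₀ P, P⟩ + c'. Then for all y, p ∈ V: ℒ_N(y, T p) = ⟨p, F(y)⟩ − ½⟨σ₀ p, p⟩ + c'. -/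
open scoped InnerProductSpace

/-- The pull-back of the constrained Lagrangian
`ℒ_N (y, P) = ⟪P, F y⟫ - ½⟪σ₀ P, P⟫ + c'` along the projector `T = a ∘ σ₀`
has the coordinate expression `ℒ_Π (y, p) = ⟪p, F y⟫ - ½⟪σ₀ p, p⟫ + c'`,
where `F y = σ₀ (a y + b)`. -/
theorem pullback_constrained_lagrangian
    (V : Type*) [NormedAddCommGroup V] [InnerProductSpace ℝ V]
    [FiniteDimensional ℝ V] (a σ₀ : V →ₗ[ℝ] V)
    (ha : a.IsSymmetric) (hσ₀ : σ₀.IsSymmetric)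
    (h1 : a ∘ₗ σ₀ ∘ₗ a = a) (h2 : σ₀ ∘ₗ a ∘ₗ σ₀ = σ₀)
    (b Γ : V) (hΓ : a Γ + b = 0) (c' : ℝ) :
    ∀ y p : V,
      ⟪a (σ₀ p), σ₀ (a y + b)⟫_ℝ - (1 / 2) * ⟪σ₀ (a (σ₀ p)), a (σ₀ p)⟫_ℝ + c' =
        ⟪p, σ₀ (a y + b)⟫_ℝ - (1 / 2) * ⟪σ₀ p, p⟫_ℝ + c' := by
  have hT : ∀ p, σ₀ (a (σ₀ p)) = σ₀ p := fun p => LinearMap.congr_fun h2 p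
  -- The projector `a ∘ σ₀` is invisible when paired with the range of `σ₀`.
  have key : ∀ p x, ⟪a (σ₀ p), σ₀ x⟫_ℝ = ⟪p, σ₀ x⟫_ℝ := fun p x => by
    rw [← hσ₀, hT, hσ₀]
  intro y p
  rw [key, hT, ← ha (σ₀ p) (σ₀ p), key, hσ₀ p p]
end

section
/- Let V be a finite-dimensional real inner product space, a : V → V self-adjoint and positive semidefinite, and σ₀ : V → V self-adjoint positive semidefinite with a∘σ₀∘a = a, σ₀∘a∘σ₀ = σ₀ and a∘σ₀ = σ₀∘a. Let K = range a, equipped with the inner product and Lebesgue (volume) measure induced from V. Then for every w ∈ V the function p ↦ exp(⟨p, σ₀(a w)⟩ − ½⟨σ₀ p, p⟩) is integrable on K, and ∫_K exp(⟨p, σ₀(a w)⟩ − ½⟨σ₀ p, p⟩) dp = ( ∫_K exp(−½⟨σ₀ p, p⟩) dp ) · exp(½⟨a w, w⟩), where both integrals are finite and positive. -/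
/-!
On `K = range a` the operator `σ₀` inverts `a`, so completing the square around `a w ∈ K` gives
`⟪p, σ₀ (a w)⟫ - ½⟪σ₀ p, p⟫ = -½⟪σ₀ (p - a w), p - a w⟫ + ½⟪a w, w⟫`
(`exp_constrained_eq_translate`), and the integral identity is translation invariance of the
volume on `K`. Integrability follows by comparison with an isotropic Gaussian, since the quadratic
form of `σ₀` is coercive on `K` (`exists_coercive_on_range`).
-/

open scoped InnerProductSpace
open MeasureTheory

/-- A submodule of a real inner product space, regarded as a type, carries the
Borel σ-algebra of its induced norm topology. -/
noncomputable instance submoduleMeasurableSpace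
    {V : Type*} [NormedAddCommGroup V] [InnerProductSpace ℝ V]
    (K : Submodule ℝ V) : MeasurableSpace K := borel K

instance submoduleBorelSpace
    {V : Type*} [NormedAddCommGroup V] [InnerProductSpace ℝ V]
    (K : Submodule ℝ V) : BorelSpace K := ⟨rfl⟩

section

variable {V : Type*} [NormedAddCommGroup V] [InnerProductSpace ℝ V]

/-- The form of `σ₀` is coercive on `range a`; the proof gives the constant `1 / (‖a‖ + 1)`. -/
lemma exists_coercive_on_range [FiniteDimensional ℝ V] (a σ₀ : V →ₗ[ℝ] V)
    (hσ₀_sym : σ₀.IsSymmetric) (hσ₀_pos : ∀ x : V, 0 ≤ ⟪σ₀ x, x⟫_ℝ)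
    (h1 : a ∘ₗ σ₀ ∘ₗ a = a) (h3 : a ∘ₗ σ₀ = σ₀ ∘ₗ a) :
    ∃ c : ℝ, 0 < c ∧ ∀ p ∈ LinearMap.range a, c * ‖p‖ ^ 2 ≤ ⟪σ₀ p, p⟫_ℝ := by
  set C : ℝ := ‖a.toContinuousLinearMap‖ + 1 with hC
  have hCpos : 0 < C := by positivity
  refine ⟨1 / C, by positivity, ?_⟩
  rintro p ⟨x, rfl⟩
  set p := a x with hp
  have hσa : σ₀ (a p) = p := by
    have e1 : a (σ₀ (a x)) = a x := LinearMap.congr_fun h1 x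
    have e3 : a (σ₀ p) = σ₀ (a p) := LinearMap.congr_fun h3 p
    rw [← e3, hp, e1]
  have hbound : ⟪p, a p⟫_ℝ ≤ C * ‖p‖ ^ 2 := by
    have e1 : ‖a p‖ ≤ ‖a.toContinuousLinearMap‖ * ‖p‖ := a.toContinuousLinearMap.le_opNorm p
    calc ⟪p, a p⟫_ℝ ≤ ‖p‖ * ‖a p‖ := real_inner_le_norm _ _
      _ ≤ ‖p‖ * (C * ‖p‖) := by gcongr; exact e1.trans (by gcongr; linarith)
      _ = C * ‖p‖ ^ 2 := by ring
  -- Cauchy-Schwarz for the form of `σ₀` and the vectors `p`, `a p`, in discriminant form.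
  have hpos := hσ₀_pos (p - (1 / C) • a p)
  have hcross : ⟪σ₀ p, a p⟫_ℝ = ‖p‖ ^ 2 := by
    rw [hσ₀_sym, hσa, real_inner_self_eq_norm_sq]
  have hexp : ⟪σ₀ (p - (1 / C) • a p), p - (1 / C) • a p⟫_ℝ
      = ⟪σ₀ p, p⟫_ℝ - 2 * (1 / C) * ‖p‖ ^ 2 + (1 / C) ^ 2 * ⟪p, a p⟫_ℝ := by
    simp only [map_sub, map_smul, hσa, inner_sub_left, inner_sub_right, real_inner_smul_left,
      real_inner_smul_right, hcross, real_inner_self_eq_norm_sq]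
    ring
  have hlast : (1 / C) ^ 2 * ⟪p, a p⟫_ℝ ≤ 1 / C * ‖p‖ ^ 2 := by
    calc (1 / C) ^ 2 * ⟪p, a p⟫_ℝ ≤ (1 / C) ^ 2 * (C * ‖p‖ ^ 2) := by gcongr
      _ = 1 / C * ‖p‖ ^ 2 := by field_simp
  linarith

/-- Completing the square around `a w`. -/
lemma exp_constrained_eq_translate (a σ₀ : V →ₗ[ℝ] V)
    (ha_sym : a.IsSymmetric) (hσ₀_sym : σ₀.IsSymmetric) (h1 : a ∘ₗ σ₀ ∘ₗ a = a) (w p : V) :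
    Real.exp (⟪p, σ₀ (a w)⟫_ℝ - (1 / 2) * ⟪σ₀ p, p⟫_ℝ)
      = Real.exp (-(1 / 2) * ⟪σ₀ (p - a w), p - a w⟫_ℝ) * Real.exp ((1 / 2) * ⟪a w, w⟫_ℝ) := by
  have e1 : a (σ₀ (a w)) = a w := LinearMap.congr_fun h1 w
  have e2 : ⟪σ₀ (a w), a w⟫_ℝ = ⟪a w, w⟫_ℝ := by rw [← ha_sym, e1]
  have e3 : ⟪σ₀ p, a w⟫_ℝ = ⟪p, σ₀ (a w)⟫_ℝ := hσ₀_sym p (a w)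
  have e4 : ⟪σ₀ (a w), p⟫_ℝ = ⟪p, σ₀ (a w)⟫_ℝ := real_inner_comm _ _
  rw [← Real.exp_add]
  simp only [map_sub, inner_sub_left, inner_sub_right, e2, e3, e4]
  ring_nf

lemma integrable_exp_neg_mul_norm_sq [FiniteDimensional ℝ V] [MeasurableSpace V] [BorelSpace V]
    {b : ℝ} (hb : 0 < b) : Integrable (fun v : V => Real.exp (-b * ‖v‖ ^ 2)) := by
  have h := (GaussianFourier.integrable_cexp_neg_mul_sq_norm_add (V := V) (b := (b : ℂ))
    (by simpa using hb) 0 0).norm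
  refine h.congr (Filter.Eventually.of_forall fun v => ?_)
  simp [Complex.norm_exp, ← Complex.ofReal_pow]

end

/-- Fiberwise equivalence of the Lagrangian and Hamiltonian path integrals:
integrating the exponential of the constrained Lagrangian
`⟪p, σ₀ (a w)⟫ - ½⟪σ₀ p, p⟫` over the constraint space `K = range a`
(with its induced inner product and Lebesgue volume) produces the Gaussian
normalization times `exp (½⟪a w, w⟫)`. -/
theorem constrained_gaussian_integral
    (V : Type*) [NormedAddCommGroup V] [InnerProductSpace ℝ V]
    [FiniteDimensional ℝ V] (a σ₀ : V →ₗ[ℝ] V)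
    (ha_sym : a.IsSymmetric) (ha_pos : ∀ x : V, 0 ≤ ⟪a x, x⟫_ℝ)
    (hσ₀_sym : σ₀.IsSymmetric) (hσ₀_pos : ∀ x : V, 0 ≤ ⟪σ₀ x, x⟫_ℝ)
    (h1 : a ∘ₗ σ₀ ∘ₗ a = a) (h2 : σ₀ ∘ₗ a ∘ₗ σ₀ = σ₀)
    (h3 : a ∘ₗ σ₀ = σ₀ ∘ₗ a) (w : V) :
    Integrable (fun p : LinearMap.range a =>
        Real.exp (⟪(p : V), σ₀ (a w)⟫_ℝ - (1 / 2) * ⟪σ₀ (p : V), (p : V)⟫_ℝ)) ∧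
    Integrable (fun p : LinearMap.range a =>
        Real.exp (-(1 / 2) * ⟪σ₀ (p : V), (p : V)⟫_ℝ)) ∧
    (∫ p : LinearMap.range a,
        Real.exp (⟪(p : V), σ₀ (a w)⟫_ℝ - (1 / 2) * ⟪σ₀ (p : V), (p : V)⟫_ℝ)) =
      (∫ p : LinearMap.range a,
        Real.exp (-(1 / 2) * ⟪σ₀ (p : V), (p : V)⟫_ℝ)) *
        Real.exp ((1 / 2) * ⟪a w, w⟫_ℝ) ∧
    0 < ∫ p : LinearMap.range a,
        Real.exp (⟪(p : V), σ₀ (a w)⟫_ℝ - (1 / 2) * ⟪σ₀ (p : V), (p : V)⟫_ℝ) ∧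
    0 < ∫ p : LinearMap.range a,
        Real.exp (-(1 / 2) * ⟪σ₀ (p : V), (p : V)⟫_ℝ) := by
  obtain ⟨c, hc, hcoer⟩ := exists_coercive_on_range a σ₀ hσ₀_sym hσ₀_pos h1 h3
  set g : LinearMap.range a → ℝ := fun p =>
    Real.exp (-(1 / 2) * ⟪σ₀ (p : V), (p : V)⟫_ℝ) with hg
  have hg_int : Integrable g := by
    refine (integrable_exp_neg_mul_norm_sq (V := LinearMap.range a) (half_pos hc)).mono' ?_ ?_
    · have hσ₀_cont : Continuous σ₀ := σ₀.continuous_of_finiteDimensional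
      have hg_cont : Continuous g := by fun_prop
      exact hg_cont.aestronglyMeasurable
    · refine Filter.Eventually.of_forall fun p => ?_
      have hp := hcoer p p.2
      rw [hg, Real.norm_of_nonneg (Real.exp_pos _).le, Real.exp_le_exp, Submodule.coe_norm]
      linarith
  set q : LinearMap.range a := ⟨a w, w, rfl⟩
  have hf : (fun p : LinearMap.range a =>
      Real.exp (⟪(p : V), σ₀ (a w)⟫_ℝ - (1 / 2) * ⟪σ₀ (p : V), (p : V)⟫_ℝ))
      = fun p => g (p - q) * Real.exp ((1 / 2) * ⟪a w, w⟫_ℝ) :=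
    funext fun p => exp_constrained_eq_translate a σ₀ ha_sym hσ₀_sym h1 w p
  have hf_int : Integrable (fun p : LinearMap.range a =>
      Real.exp (⟪(p : V), σ₀ (a w)⟫_ℝ - (1 / 2) * ⟪σ₀ (p : V), (p : V)⟫_ℝ)) := by
    rw [hf]
    exact (hg_int.comp_sub_right q).mul_const _
  refine ⟨hf_int, hg_int, ?_, integral_exp_pos hf_int, integral_exp_pos hg_int⟩
  rw [hf, integral_mul_const, integral_sub_right_eq_self g q]
end

section
/- Fix integers n, m ≥ 1, an invertible symmetric real n×n matrix (g^{λμ}), a symmetric positive-definite real m×m matrix (κ_{pq}), real constants c^r_{pq}, and a fixed array (A^p_μ) ∈ ℝ^{m×n}. For k ∈ ℝ^{m×n×n} define F(k)^p_{λβ} = ½(k^p_{λβ} − k^p_{βλ} + Σ_{r,q} c^p_{rq} A^r_λ A^q_β) and L(k) = Σ κ_{pq} g^{λμ} g^{βν} F(k)^p_{λβ} F(k)^q_{μν} · √|det g|. Then for every k the gradient of L at k, i.e. the array (∂L/∂k^r_{μλ}), is antisymmetric in the indices (μ, λ); and the map sending k to this gradient is a linear-affine map of ℝ^{m×n×n}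 whose image is exactly the subspace of arrays p ∈ ℝ^{m×n×n} antisymmetric in (μ, λ). -/
/-!
Write `Φ X` for the array obtained from `X` by contracting with `κ ⊗ g ⊗ g` (`raiseIndices`), and
`⟨X, Y⟩ = ∑ X^r_{μλ} Y^r_{μλ}` (`pairing`). Then `L k = ⟨Φ (F k), F k⟩ s` with `s = √|det g| > 0`,
and `F k = D k + C`, where `D` is half the antisymmetrizer and `C` does not depend on `k`. As `Φ` is
self-adjoint, the derivative of `L` at `k` in the direction `v` is `2 s ⟨Φ (F k), D v⟩`
(`fderiv_energy`), so the gradient is `s` times the antisymmetrization of `Φ (F k)`. This is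
antisymmetric and affine in `k`.

For surjectivity, `Φ` is inverted by contraction with `κ⁻¹ ⊗ g⁻¹ ⊗ g⁻¹`, which preserves
antisymmetry. For an antisymmetric `P` and `X = Φ⁻¹ P`, the point `k = (2s)⁻¹ X - C` has
`F k = (2s)⁻¹ X + (C + Cᵀ) / 2`, and the symmetric second term does not contribute to the gradient.
-/

namespace YangMillsLegendre

/-- Contraction of an array with `κ ⊗ g ⊗ g`:
`(Φ X)_{r μ ν} = ∑ κ_{rq} g_{μα} g_{νβ} X_{q α β}`. -/
noncomputable def raiseIndices {n m : ℕ} (κ : Matrix (Fin m) (Fin m) ℝ)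
    (g : Matrix (Fin n) (Fin n) ℝ) :
    (Fin m → Fin n → Fin n → ℝ) →ₗ[ℝ] (Fin m → Fin n → Fin n → ℝ) where
  toFun X r μ ν := ∑ q, ∑ α, ∑ β, κ r q * g μ α * g ν β * X q α β
  map_add' X Y := by
    ext r μ ν
    simp only [Pi.add_apply, mul_add, Finset.sum_add_distrib]
  map_smul' a X := by
    ext r μ ν
    simp only [Pi.smul_apply, smul_eq_mul, Finset.mul_sum, RingHom.id_apply]
    refine Finset.sum_congr rfl fun q _ => Finset.sum_congr rfl fun α _ =>
      Finset.sum_congr rfl fun β _ => ?_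
    ring

/-- The transposition `X_{r μ ν} ↦ X_{r ν μ}` of the two base indices. -/
def transposeIndices (n m : ℕ) :
    (Fin m → Fin n → Fin n → ℝ) →ₗ[ℝ] (Fin m → Fin n → Fin n → ℝ) where
  toFun X r μ ν := X r ν μ
  map_add' _ _ := rfl
  map_smul' _ _ := rfl

/-- The coordinate pairing `∑ X_{r μ ν} Y_{r μ ν}`. -/
noncomputable def pairing (n m : ℕ) :
    (Fin m → Fin n → Fin n → ℝ) →ₗ[ℝ] (Fin m → Fin n → Fin n → ℝ) →ₗ[ℝ] ℝ :=
  LinearMap.mk₂ ℝ (fun X Y => ∑ r, ∑ μ, ∑ ν, X r μ ν * Y r μ ν)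
    (fun X X' Y => by simp only [Pi.add_apply, add_mul, Finset.sum_add_distrib])
    (fun a X Y => by
      simp only [Pi.smul_apply, smul_eq_mul, Finset.mul_sum, mul_assoc])
    (fun X Y Y' => by simp only [Pi.add_apply, mul_add, Finset.sum_add_distrib])
    (fun a X Y => by
      simp only [Pi.smul_apply, smul_eq_mul, Finset.mul_sum, mul_left_comm])

variable {n m : ℕ}

lemma raiseIndices_apply (κ : Matrix (Fin m) (Fin m) ℝ) (g : Matrix (Fin n) (Fin n) ℝ)
    (X : Fin m → Fin n → Fin n → ℝ) (r : Fin m) (μ ν : Fin n) :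
    raiseIndices κ g X r μ ν = ∑ q, ∑ α, ∑ β, κ r q * g μ α * g ν β * X q α β := rfl

lemma transposeIndices_apply (X : Fin m → Fin n → Fin n → ℝ) (r : Fin m) (μ ν : Fin n) :
    transposeIndices n m X r μ ν = X r ν μ := rfl

lemma pairing_apply (X Y : Fin m → Fin n → Fin n → ℝ) :
    pairing n m X Y = ∑ r, ∑ μ, ∑ ν, X r μ ν * Y r μ ν := rfl

lemma raiseIndices_transpose (κ : Matrix (Fin m) (Fin m) ℝ) (g : Matrix (Fin n) (Fin n) ℝ)
    (X : Fin m → Fin n → Fin n → ℝ) :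
    raiseIndices κ g (transposeIndices n m X) = transposeIndices n m (raiseIndices κ g X) := by
  ext r μ ν
  simp only [raiseIndices_apply, transposeIndices_apply]
  refine Finset.sum_congr rfl fun q _ => ?_
  rw [Finset.sum_comm]
  refine Finset.sum_congr rfl fun α _ => Finset.sum_congr rfl fun β _ => ?_
  ring

lemma pairing_comm (X Y : Fin m → Fin n → Fin n → ℝ) :
    pairing n m X Y = pairing n m Y X := by
  simp only [pairing_apply, mul_comm]

lemma pairing_transpose (X Y : Fin m → Fin n → Fin n → ℝ) :
    pairing n m X (transposeIndices n m Y) = pairing n m (transposeIndices n m X) Y := by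
  simp only [pairing_apply, transposeIndices_apply]
  exact Finset.sum_congr rfl fun r _ => Finset.sum_comm

/-- The matrix form of `raiseIndices`, which turns its composition law into matrix algebra. -/
lemma raiseIndices_eq_matrix (κ : Matrix (Fin m) (Fin m) ℝ) (g : Matrix (Fin n) (Fin n) ℝ)
    (X : Fin m → Fin n → Fin n → ℝ) (r : Fin m) :
    (Matrix.of (raiseIndices κ g X r)) = ∑ q, κ r q • (g * Matrix.of (X q) * g.transpose) := by
  ext μ ν
  simp only [Matrix.of_apply, raiseIndices_apply, Matrix.sum_apply, Matrix.smul_apply,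
    Matrix.mul_apply, Matrix.transpose_apply, smul_eq_mul, Finset.sum_mul, Finset.mul_sum]
  refine Finset.sum_congr rfl fun q _ => ?_
  rw [Finset.sum_comm]
  refine Finset.sum_congr rfl fun α _ => Finset.sum_congr rfl fun β _ => ?_
  ring

lemma raiseIndices_comp (κ κ' : Matrix (Fin m) (Fin m) ℝ) (g g' : Matrix (Fin n) (Fin n) ℝ)
    (X : Fin m → Fin n → Fin n → ℝ) :
    raiseIndices κ g (raiseIndices κ' g' X) = raiseIndices (κ * κ') (g * g') X := by
  funext r
  apply Matrix.of.injective
  simp only [raiseIndices_eq_matrix, Matrix.mul_sum, Matrix.sum_mul, Finset.smul_sum,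
    Matrix.mul_apply, Finset.sum_smul, Matrix.mul_smul, Matrix.smul_mul, smul_smul,
    Matrix.transpose_mul, Matrix.mul_assoc]
  exact Finset.sum_comm

lemma raiseIndices_one (X : Fin m → Fin n → Fin n → ℝ) :
    raiseIndices (1 : Matrix (Fin m) (Fin m) ℝ) (1 : Matrix (Fin n) (Fin n) ℝ) X = X := by
  funext r
  apply Matrix.of.injective
  rw [raiseIndices_eq_matrix]
  simp [Matrix.one_apply, ite_smul]

lemma pairing_raiseIndices (κ : Matrix (Fin m) (Fin m) ℝ) (g : Matrix (Fin n) (Fin n) ℝ)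
    (X Y : Fin m → Fin n → Fin n → ℝ) :
    pairing n m (raiseIndices κ g X) Y = ∑ p, ∑ q, ∑ lam, ∑ μ, ∑ β, ∑ ν,
      κ p q * g lam μ * g β ν * Y p lam β * X q μ ν := by
  simp only [pairing_apply, raiseIndices_apply, Finset.sum_mul]
  refine Finset.sum_congr rfl fun p _ => ?_
  -- Bring the summation order `λ, β, q, μ, ν` to `q, λ, μ, β, ν`.
  calc _ = ∑ lam, ∑ q, ∑ β, ∑ μ, ∑ ν, κ p q * g lam μ * g β ν * X q μ ν * Y p lam β :=
        Finset.sum_congr rfl fun lam _ => Finset.sum_comm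
    _ = ∑ q, ∑ lam, ∑ β, ∑ μ, ∑ ν, κ p q * g lam μ * g β ν * X q μ ν * Y p lam β :=
        Finset.sum_comm
    _ = _ := by
      refine Finset.sum_congr rfl fun q _ => Finset.sum_congr rfl fun lam _ => ?_
      rw [Finset.sum_comm]
      refine Finset.sum_congr rfl fun μ _ => Finset.sum_congr rfl fun β _ =>
        Finset.sum_congr rfl fun ν _ => ?_
      ring

lemma pairing_raiseIndices_comm {κ : Matrix (Fin m) (Fin m) ℝ} {g : Matrix (Fin n) (Fin n) ℝ}
    (hκ : κ.IsSymm) (hg : g.IsSymm) (X Y : Fin m → Fin n → Fin n → ℝ) :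
    pairing n m (raiseIndices κ g X) Y = pairing n m (raiseIndices κ g Y) X := by
  rw [pairing_raiseIndices, pairing_raiseIndices, Finset.sum_comm]
  refine Finset.sum_congr rfl fun p _ => Finset.sum_congr rfl fun q _ => ?_
  rw [Finset.sum_comm]
  refine Finset.sum_congr rfl fun α _ => Finset.sum_congr rfl fun β _ => ?_
  rw [Finset.sum_comm]
  refine Finset.sum_congr rfl fun μ _ => Finset.sum_congr rfl fun ν _ => ?_
  rw [hκ.apply p q, hg.apply α β, hg.apply μ ν]
  ring

/-- The derivative of the quadratic energy `k ↦ ⟨Φ (D k + C), D k + C⟩` for linear `D`, evaluated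
on a direction `v`. -/
lemma fderiv_energy {κ : Matrix (Fin m) (Fin m) ℝ} {g : Matrix (Fin n) (Fin n) ℝ}
    (hκ : κ.IsSymm) (hg : g.IsSymm)
    (D : (Fin m → Fin n → Fin n → ℝ) →ₗ[ℝ] (Fin m → Fin n → Fin n → ℝ))
    (C : Fin m → Fin n → Fin n → ℝ) (s : ℝ) (k v : Fin m → Fin n → Fin n → ℝ) :
    fderiv ℝ (fun k => pairing n m (raiseIndices κ g (D k + C)) (D k + C) * s) k v =
      2 * s * pairing n m (raiseIndices κ g (D k + C)) (D v) := by
  have hD : HasFDerivAt (fun k => D k + C) (LinearMap.toContinuousLinearMap D) k :=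
    (LinearMap.toContinuousLinearMap D).hasFDerivAt.add_const C
  have hR : HasFDerivAt (fun k => raiseIndices κ g (D k + C))
      ((LinearMap.toContinuousLinearMap (raiseIndices κ g)).comp
        (LinearMap.toContinuousLinearMap D)) k :=
    (LinearMap.toContinuousLinearMap (raiseIndices κ g)).hasFDerivAt.comp k hD
  let B := LinearMap.toContinuousBilinearMap (pairing n m)
  have h := (B.hasFDerivAt_of_bilinear hR hD).mul_const s
  have h' : HasFDerivAt
    (fun k => pairing n m (raiseIndices κ g (D k + C)) (D k + C) * s) _ k := h
  rw [h'.fderiv]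
  have h1 : pairing n m (raiseIndices κ g (D v)) (D k + C) =
      pairing n m (raiseIndices κ g (D k + C)) (D v) := pairing_raiseIndices_comm hκ hg _ _
  change s * (pairing n m (raiseIndices κ g (D k + C)) (D v) +
    pairing n m (raiseIndices κ g (D v)) (D k + C)) = _
  rw [h1]
  ring

end YangMillsLegendre

open YangMillsLegendre

/-- The Legendre map of the Yang–Mills Lagrangian
`L k = Σ κ_{pq} g^{λμ} g^{βν} F(k)^p_{λβ} F(k)^q_{μν} √|det g|`, where
`F(k)^p_{λβ} = ½ (k^p_{λβ} - k^p_{βλ} + Σ c^p_{rq} A^r_λ A^q_β)`: the gradient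
`(∂L/∂k^r_{μλ})` is antisymmetric in `(μ, λ)`, and `k ↦ grad L k` is an affine
map whose image is exactly the subspace of arrays antisymmetric in `(μ, λ)`. -/
theorem yang_mills_legendre_map
    (n m : ℕ) (hn : 1 ≤ n) (hm : 1 ≤ m)
    (g : Matrix (Fin n) (Fin n) ℝ) (hg_symm : g.IsSymm) (hg_inv : IsUnit g.det)
    (κ : Matrix (Fin m) (Fin m) ℝ) (hκ : κ.PosDef)
    (c : Fin m → Fin m → Fin m → ℝ) (A : Fin m → Fin n → ℝ)
    (F : (Fin m → Fin n → Fin n → ℝ) → (Fin m → Fin n → Fin n → ℝ))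
    (hF : ∀ k p lam β, F k p lam β =
      (1 / 2) * (k p lam β - k p β lam + ∑ r, ∑ q, c p r q * A r lam * A q β))
    (L : (Fin m → Fin n → Fin n → ℝ) → ℝ)
    (hL : ∀ k, L k = (∑ p, ∑ q, ∑ lam, ∑ μ, ∑ β, ∑ ν,
      κ p q * g lam μ * g β ν * F k p lam β * F k q μ ν) * Real.sqrt |g.det|)
    (e : Fin m → Fin n → Fin n → (Fin m → Fin n → Fin n → ℝ))
    (he : ∀ r μ lam, e r μ lam = fun r' μ' lam' =>
      if r' = r ∧ μ' = μ ∧ lam' = lam then (1 : ℝ) else 0)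
    (grad : (Fin m → Fin n → Fin n → ℝ) → (Fin m → Fin n → Fin n → ℝ))
    (hgrad : ∀ k r μ lam, grad k r μ lam = fderiv ℝ L k (e r μ lam)) :
    (∀ k r μ lam, grad k r lam μ = - grad k r μ lam) ∧
    (∃ T : (Fin m → Fin n → Fin n → ℝ) →ᵃ[ℝ] (Fin m → Fin n → Fin n → ℝ),
      ∀ k, T k = grad k) ∧
    Set.range grad =
      {p : Fin m → Fin n → Fin n → ℝ | ∀ r μ lam, p r lam μ = - p r μ lam} := by
  set s := Real.sqrt |g.det| with hs
  have hs0 : s ≠ 0 := (Real.sqrt_pos.mpr (abs_pos.mpr hg_inv.ne_zero)).ne'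
  have hκ_symm : κ.IsSymm := by
    have := hκ.isHermitian
    rwa [Matrix.IsHermitian, Matrix.conjTranspose_eq_transpose_of_trivial] at this
  have hκ_inv : IsUnit κ.det := hκ.det_pos.ne'.isUnit
  let τ := transposeIndices n m
  let Φ := raiseIndices κ g
  let D : (Fin m → Fin n → Fin n → ℝ) →ₗ[ℝ] (Fin m → Fin n → Fin n → ℝ) :=
    (1 / 2 : ℝ) • (LinearMap.id - τ)
  let C : Fin m → Fin n → Fin n → ℝ :=
    fun p lam β => (1 / 2) * ∑ r, ∑ q, c p r q * A r lam * A q β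
  have hFD : ∀ k, F k = D k + C := by
    intro k
    ext p lam β
    rw [hF]
    change _ = (1 / 2 : ℝ) * (k p lam β - k p β lam) +
      (1 / 2) * ∑ r, ∑ q, c p r q * A r lam * A q β
    ring
  have hLeq : L = fun k => pairing n m (raiseIndices κ g (D k + C)) (D k + C) * s := by
    funext k
    rw [hL, hFD, pairing_raiseIndices]
  have hpair : ∀ X r μ lam, pairing n m X (e r μ lam) = X r μ lam := by
    intro X r μ lam
    simp only [pairing_apply, he, ite_and, mul_ite, mul_one, mul_zero]
    simp
  have hgradF : ∀ k, grad k = s • (Φ (D k + C) - τ (Φ (D k + C))) := by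
    intro k
    ext r μ lam
    rw [hgrad, hLeq, fderiv_energy hκ_symm hg_symm]
    have h1 : D (e r μ lam) = (1 / 2 : ℝ) • (e r μ lam - transposeIndices n m (e r μ lam)) := rfl
    rw [h1, map_smul, map_sub, pairing_transpose, hpair, hpair]
    change 2 * s * ((1 / 2 : ℝ) * (Φ (D k + C) r μ lam - τ (Φ (D k + C)) r μ lam)) =
      s * (Φ (D k + C) r μ lam - τ (Φ (D k + C)) r μ lam)
    ring
  have hanti : ∀ k r μ lam, grad k r lam μ = - grad k r μ lam := by
    intro k r μ lam
    rw [hgradF]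
    change s * (Φ (D k + C) r lam μ - Φ (D k + C) r μ lam) =
      -(s * (Φ (D k + C) r μ lam - Φ (D k + C) r lam μ))
    ring
  refine ⟨hanti, ?_, ?_⟩
  · let E : (Fin m → Fin n → Fin n → ℝ) →ₗ[ℝ] (Fin m → Fin n → Fin n → ℝ) :=
      s • ((LinearMap.id - τ) ∘ₗ Φ)
    refine ⟨(E ∘ₗ D).toAffineMap + AffineMap.const ℝ _ (E C), fun k => ?_⟩
    rw [hgradF]
    change E (D k) + E C = E (D k + C)
    rw [map_add]
  · apply Set.Subset.antisymm
    · rintro _ ⟨k, rfl⟩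
      exact hanti k
    · intro P hP
      have hτP : τ P = -P := by
        ext r μ lam
        exact hP r μ lam
      let X := raiseIndices κ⁻¹ g⁻¹ P
      have hΦX : Φ X = P := by
        change raiseIndices κ g (raiseIndices κ⁻¹ g⁻¹ P) = P
        rw [raiseIndices_comp, Matrix.mul_nonsing_inv _ hκ_inv, Matrix.mul_nonsing_inv _ hg_inv,
          raiseIndices_one]
      have hτX : τ X = -X := by
        change transposeIndices n m (raiseIndices κ⁻¹ g⁻¹ P) = _
        rw [← raiseIndices_transpose]
        change raiseIndices κ⁻¹ g⁻¹ (τ P) = _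
        rw [hτP, map_neg]
      have hττ : ∀ Y, τ (τ Y) = Y := fun _ => rfl
      have hΦτ : ∀ Y, Φ (τ Y) = τ (Φ Y) := raiseIndices_transpose κ g
      -- `D (-C)` cancels the antisymmetric part of `C`; the symmetric part is invisible to `grad`.
      refine ⟨(1 / (2 * s)) • X - C, ?_⟩
      have hDk : D ((1 / (2 * s)) • X - C) + C =
          (1 / (2 * s)) • X + (1 / 2 : ℝ) • (C + τ C) := by
        change (1 / 2 : ℝ) • (((1 / (2 * s)) • X - C) - τ ((1 / (2 * s)) • X - C)) + C = _
        rw [map_sub, map_smul, hτX]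
        module
      rw [hgradF, hDk]
      simp only [map_add, map_smul, hΦτ, hΦX, hτP, hττ]
      have : s * (1 / (2 * s)) = 1 / 2 := by field_simp
      calc _ = (2 * (s * (1 / (2 * s)))) • P := by module
        _ = P := by rw [this]; norm_num
end
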